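/- arXiv:1503.00864 — 7 statements merged into one kernel-verified Lean document; each statement's English description precedes it below -/
import Mathlib

section
/- Let n ≥ 1 and, for i = 1,…,n, let c_i > 0 and A_i, a_i, b_i, B_i be real numbers, and let b_0, B_0 be real numbers, such that b_i ≥ 0 and |a_i| < b_0 − b_i for every i. Define g : ℝ → ℝ by g(x) = Σ_{i=1}^n c_i · exp(A_i + a_i x) · cosh(B_i + b_i x) / cosh(B_0 + b_0 x). Then there exists ξ ∈ ℝ such that g is strictly increasing on (−∞, ξ], strictly decreasing on [ξ, ∞) (so g attains a unique maximum at ξ), and g(x) → 0 as x → +∞ and as x → −∞. -/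
open Real Set Filter

lemma aux_top (q b0 B0 : ℝ) (h : q < b0) :
    Tendsto (fun x => Real.exp (q * x) / Real.cosh (B0 + b0 * x)) atTop (nhds 0) := by
  have h1 : Tendsto (fun x : ℝ => 2 * Real.exp (-B0 + (q - b0) * x)) atTop (nhds (2 * 0)) := by
    apply Tendsto.const_mul
    apply Real.tendsto_exp_atBot.comp
    apply tendsto_atBot_add_const_left
    exact tendsto_id.const_mul_atTop_of_neg (by linarith)
  rw [mul_zero] at h1
  refine squeeze_zero (fun x => by have := Real.cosh_pos (B0 + b0 * x); positivity) (fun x => ?_) h1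
  rw [div_le_iff₀ (Real.cosh_pos _), Real.cosh_eq]
  have e : Real.exp (q * x) = Real.exp (-B0 + (q - b0) * x) * Real.exp (B0 + b0 * x) := by
    rw [← Real.exp_add]; ring_nf
  have := mul_pos (Real.exp_pos (-B0 + (q - b0) * x)) (Real.exp_pos (-(B0 + b0 * x)))
  rw [e]; linarith

lemma aux_bot (q b0 B0 : ℝ) (h : -b0 < q) :
    Tendsto (fun x => Real.exp (q * x) / Real.cosh (B0 + b0 * x)) atBot (nhds 0) := by
  have := (aux_top (-q) b0 (-B0) (by linarith)).comp tendsto_neg_atBot_atTop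
  refine this.congr fun x => ?_
  simp only [Function.comp]
  rw [← Real.cosh_neg (B0 + b0 * x)]
  ring_nf

lemma aux_main {ι : Type} [Fintype ι] [Nonempty ι] (p q : ι → ℝ) (b0 B0 : ℝ)
    (hp : ∀ i, 0 < p i) (hq : ∀ i, |q i| < b0) (g : ℝ → ℝ)
    (hg : ∀ x, g x = (∑ i, p i * Real.exp (q i * x)) / Real.cosh (B0 + b0 * x)) :
    ∃ ξ : ℝ, StrictMonoOn g (Iic ξ) ∧ StrictAntiOn g (Ici ξ) ∧
      Tendsto g atTop (nhds 0) ∧ Tendsto g atBot (nhds 0) := by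
  have hg2 : g = fun x => ∑ i, p i * (Real.exp (q i * x) / Real.cosh (B0 + b0 * x)) := by
    funext x; rw [hg, Finset.sum_div]; simp only [mul_div_assoc]
  have htop : Tendsto g atTop (nhds 0) := by
    rw [hg2]
    have := tendsto_finsetSum (Finset.univ : Finset ι) fun i _ =>
      (aux_top (q i) b0 B0 (abs_lt.1 (hq i)).2).const_mul (p i)
    simpa using this
  have hbot : Tendsto g atBot (nhds 0) := by
    rw [hg2]
    have := tendsto_finsetSum (Finset.univ : Finset ι) fun i _ =>
      (aux_bot (q i) b0 B0 (abs_lt.1 (hq i)).1).const_mul (p i)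
    simpa using this
  have hth : ∀ x, HasDerivAt (fun x => B0 + b0 * x) b0 x := fun x => by
    simpa using ((hasDerivAt_id x).const_mul b0).const_add B0
  have hex : ∀ i x, HasDerivAt (fun x => Real.exp (q i * x)) (Real.exp (q i * x) * q i) x :=
    fun i x => by
      have h : HasDerivAt (fun x => q i * x) (q i) x := by
        simpa using (hasDerivAt_id x).const_mul (q i)
      exact h.exp
  let N : ℝ → ℝ := fun x => ∑ i, p i * Real.exp (q i * x)
  let N1 : ℝ → ℝ := fun x => ∑ i, p i * (Real.exp (q i * x) * q i)
  let N2 : ℝ → ℝ := fun x => ∑ i, p i * (Real.exp (q i * x) * q i * q i)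
  have hN : ∀ x, HasDerivAt N (N1 x) x := fun x =>
    HasDerivAt.fun_sum fun i _ => (hex i x).const_mul (p i)
  have hN1 : ∀ x, HasDerivAt N1 (N2 x) x := fun x =>
    HasDerivAt.fun_sum fun i _ => ((hex i x).mul_const (q i)).const_mul (p i)
  let H : ℝ → ℝ := fun x => N1 x * Real.cosh (B0 + b0 * x) - N x * (Real.sinh (B0 + b0 * x) * b0)
  have hH : ∀ x, HasDerivAt H ((N2 x - b0 ^ 2 * N x) * Real.cosh (B0 + b0 * x)) x := fun x => by
    refine (((hN1 x).fun_mul (hth x).cosh).fun_sub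
      ((hN x).fun_mul ((hth x).sinh.mul_const b0))).congr_deriv ?_
    ring
  have hneg : ∀ x, N2 x - b0 ^ 2 * N x < 0 := fun x => by
    have : N2 x < b0 ^ 2 * N x := by
      simp only [N2, N, Finset.mul_sum]
      refine Finset.sum_lt_sum_of_nonempty Finset.univ_nonempty fun i _ => ?_
      have h1 := mul_pos (hp i) (Real.exp_pos (q i * x))
      have h2 : q i ^ 2 < b0 ^ 2 := sq_lt_sq' (abs_lt.1 (hq i)).1 (abs_lt.1 (hq i)).2
      nlinarith
    linarith
  have hHanti : StrictAnti H := strictAnti_of_deriv_neg fun x => by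
    rw [(hH x).deriv]
    exact mul_neg_of_neg_of_pos (hneg x) (Real.cosh_pos _)
  have hgd : ∀ x, HasDerivAt g (H x / Real.cosh (B0 + b0 * x) ^ 2) x := fun x => by
    have e : g = fun x => N x / Real.cosh (B0 + b0 * x) := funext hg
    rw [e]
    exact (hN x).fun_div (hth x).cosh (Real.cosh_pos _).ne'
  have hcont : Continuous g := continuous_iff_continuousAt.2 fun x => (hgd x).continuousAt
  have hpos : 0 < g 0 := by
    rw [hg]
    exact div_pos (Finset.sum_pos (fun i _ => mul_pos (hp i) (Real.exp_pos _))
      Finset.univ_nonempty) (Real.cosh_pos _)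
  obtain ⟨ξ, hξ⟩ : ∃ ξ, ∀ y, g y ≤ g ξ := by
    apply hcont.exists_forall_ge' 0
    rw [cocompact_eq_atBot_atTop, eventually_sup]
    exact ⟨(hbot.eventually_lt_const hpos).mono fun _ h => h.le,
      (htop.eventually_lt_const hpos).mono fun _ h => h.le⟩
  have h0 : H ξ = 0 := by
    have hm : IsLocalMax g ξ := Eventually.of_forall hξ
    have := hm.hasDerivAt_eq_zero (hgd ξ)
    have hc := (Real.cosh_pos (B0 + b0 * ξ)).ne'
    simpa [hc] using this
  refine ⟨ξ, ?_, ?_, htop, hbot⟩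
  · refine strictMonoOn_of_deriv_pos (convex_Iic ξ) hcont.continuousOn fun x hx => ?_
    rw [interior_Iic] at hx
    rw [(hgd x).deriv]
    have := hHanti hx
    exact div_pos (by linarith) (pow_pos (Real.cosh_pos _) 2)
  · refine strictAntiOn_of_deriv_neg (convex_Ici ξ) hcont.continuousOn fun x hx => ?_
    rw [interior_Ici] at hx
    rw [(hgd x).deriv]
    have := hHanti hx
    exact div_neg_of_neg_of_pos (by linarith) (pow_pos (Real.cosh_pos _) 2)

theorem stmt_0 (n : ℕ) (hn : 1 ≤ n)
    (c A a b B : Fin n → ℝ) (b0 B0 : ℝ)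
    (hc : ∀ i, 0 < c i) (hb : ∀ i, 0 ≤ b i)
    (hab : ∀ i, |a i| < b0 - b i)
    (g : ℝ → ℝ)
    (hg : ∀ x, g x = ∑ i, c i * Real.exp (A i + a i * x) * Real.cosh (B i + b i * x) /
      Real.cosh (B0 + b0 * x)) :
    ∃ ξ : ℝ, StrictMonoOn g (Iic ξ) ∧ StrictAntiOn g (Ici ξ) ∧
      Tendsto g atTop (nhds 0) ∧ Tendsto g atBot (nhds 0) := by
  haveI : Nonempty (Fin n) := ⟨⟨0, hn⟩⟩
  refine aux_main (ι := Fin n ⊕ Fin n)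
    (Sum.elim (fun i => c i / 2 * Real.exp (A i + B i)) (fun i => c i / 2 * Real.exp (A i - B i)))
    (Sum.elim (fun i => a i + b i) (fun i => a i - b i)) b0 B0 ?_ ?_ g ?_
  · rintro (i | i)
    · have := hc i
      simp only [Sum.elim_inl]; positivity
    · have := hc i
      simp only [Sum.elim_inr]; positivity
  · rintro (i | i)
    · have := abs_lt.1 (hab i)
      have := hb i
      simp only [Sum.elim_inl]; rw [abs_lt]; constructor <;> linarith
    · have := abs_lt.1 (hab i)
      have := hb i
      simp only [Sum.elim_inr]; rw [abs_lt]; constructor <;> linarith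
  · intro x
    rw [hg, ← Finset.sum_div, Fintype.sum_sum_type, ← Finset.sum_add_distrib]
    congr 1
    refine Finset.sum_congr rfl fun i _ => ?_
    simp only [Sum.elim_inl, Sum.elim_inr]
    rw [mul_assoc (c i / 2), mul_assoc (c i / 2), ← Real.exp_add, ← Real.exp_add, Real.cosh_eq]
    have e1 : A i + B i + (a i + b i) * x = (A i + a i * x) + (B i + b i * x) := by ring
    have e2 : A i - B i + (a i - b i) * x = (A i + a i * x) + -(B i + b i * x) := by ring
    rw [e1, e2, Real.exp_add (A i + a i * x) (B i + b i * x),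
      Real.exp_add (A i + a i * x) (-(B i + b i * x))]
    ring
end

section
/- Let a, b, b_0, B, B_0 be real numbers with b ≥ 0 and |a| < b_0 − b. Define f : ℝ → ℝ by f(x) = a·cosh(B + b x)·cosh(B_0 + b_0 x) + b·sinh(B + b x)·cosh(B_0 + b_0 x) − b_0·cosh(B + b x)·sinh(B_0 + b_0 x). Then f is strictly decreasing on ℝ. -/
open Real

theorem stmt_1 (a b b0 B B0 : ℝ) (hb : 0 ≤ b) (hab : |a| < b0 - b)
    (f : ℝ → ℝ)
    (hf : ∀ x, f x = a * Real.cosh (B + b * x) * Real.cosh (B0 + b0 * x)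
      + b * Real.sinh (B + b * x) * Real.cosh (B0 + b0 * x)
      - b0 * Real.cosh (B + b * x) * Real.sinh (B0 + b0 * x)) :
    StrictAnti f := by
  have habs : ∀ y : ℝ, |Real.sinh y| ≤ Real.cosh y := fun y =>
    abs_le_of_sq_le_sq (by nlinarith [Real.cosh_sq y]) (Real.cosh_pos y).le
  have hb0 : 0 < b0 := by linarith [abs_nonneg a]
  have hd : ∀ x, HasDerivAt f
      (a * (b * Real.sinh (B + b * x) * Real.cosh (B0 + b0 * x)
        + b0 * Real.cosh (B + b * x) * Real.sinh (B0 + b0 * x))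
        - (b0 - b) * (b0 + b) * (Real.cosh (B + b * x) * Real.cosh (B0 + b0 * x))) x := by
    intro x
    have h1 : HasDerivAt (fun x => B + b * x) b x := by
      simpa using ((hasDerivAt_id x).const_mul b).const_add B
    have h2 : HasDerivAt (fun x => B0 + b0 * x) b0 x := by
      simpa using ((hasDerivAt_id x).const_mul b0).const_add B0
    rw [funext hf]
    have := (((h1.cosh.const_mul a).mul h2.cosh).add ((h1.sinh.const_mul b).mul h2.cosh)).sub
      ((h1.cosh.const_mul b0).mul h2.sinh)
    refine HasDerivAt.congr_deriv this ?_
    ring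
  refine strictAnti_of_deriv_neg fun x => ?_
  rw [(hd x).deriv]
  have hc := Real.cosh_pos (B + b * x)
  have hC := Real.cosh_pos (B0 + b0 * x)
  have hs := habs (B + b * x)
  have hS := habs (B0 + b0 * x)
  generalize Real.cosh (B + b * x) = c at *
  generalize Real.cosh (B0 + b0 * x) = C at *
  generalize Real.sinh (B + b * x) = s at *
  generalize Real.sinh (B0 + b0 * x) = S at *
  have hk : |b * s * C + b0 * c * S| ≤ (b0 + b) * (c * C) := by
    calc |b * s * C + b0 * c * S| ≤ |b * s * C| + |b0 * c * S| := abs_add_le _ _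
      _ = b * |s| * C + b0 * c * |S| := by
        simp only [abs_mul, abs_of_nonneg hb, abs_of_pos hb0, abs_of_pos hc, abs_of_pos hC]
      _ ≤ b * c * C + b0 * c * C := by gcongr
      _ = _ := by ring
  have h1 : a * (b * s * C + b0 * c * S) ≤ |a| * ((b0 + b) * (c * C)) :=
    (le_abs_self _).trans (by rw [abs_mul]; gcongr)
  have h2 : |a| * ((b0 + b) * (c * C)) < (b0 - b) * ((b0 + b) * (c * C)) := by
    gcongr
  linarith
end

section
/- Let a, b, b_0, B, B_0 be real numbers with b ≥ 0 and |a| < b_0 − b. Define f : ℝ → ℝ by f(x) = a·cosh(B + b x)·cosh(B_0 + b_0 x) + b·sinh(B + b x)·cosh(B_0 + b_0 x) − b_0·cosh(B + b x)·sinh(B_0 + b_0 x). Then f(x) → +∞ as x → −∞ and f(x) → −∞ as x → +∞. -/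
open Real Filter

theorem aux_top_s2 (a b b0 B B0 : ℝ) (hb : 0 ≤ b) (hab : |a| < b0 - b) :
    Tendsto (fun x => a * Real.cosh (B + b * x) * Real.cosh (B0 + b0 * x)
      + b * Real.sinh (B + b * x) * Real.cosh (B0 + b0 * x)
      - b0 * Real.cosh (B + b * x) * Real.sinh (B0 + b0 * x)) atTop atBot := by
  have ha0 := abs_nonneg a
  have hb0 : 0 < b0 := by linarith
  have hd : 0 < b0 - b - |a| := by linarith
  have hv : Tendsto (fun x : ℝ => B0 + b0 * x) atTop atTop :=
    tendsto_atTop_add_const_left _ _ (tendsto_id.const_mul_atTop hb0)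
  have hg : Tendsto (fun x : ℝ => (b0 - b - |a|) * (B0 + b0 * x) - (|a| + b)) atTop atTop :=
    tendsto_atTop_add_const_right _ _ (hv.const_mul_atTop hd)
  have hg' := tendsto_neg_atTop_atBot.comp hg
  refine tendsto_atBot_mono' _ ?_ hg'
  filter_upwards [hv.eventually_ge_atTop 0, hg.eventually_ge_atTop 0] with x h0 h1
  simp only [Function.comp]
  generalize B0 + b0 * x = v at *
  generalize B + b * x = u at *
  have hs : v ≤ Real.sinh v := Real.self_le_sinh_iff.2 h0
  have hc : Real.cosh v ≤ Real.sinh v + 1 := by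
    have := Real.cosh_sub_sinh v
    have h2 : Real.exp (-v) ≤ 1 := Real.exp_le_one_iff.2 (by linarith)
    linarith
  have hu1 := Real.one_le_cosh u
  have hv1 := Real.one_le_cosh v
  have hsu : Real.sinh u ≤ Real.cosh u := (Real.sinh_lt_cosh u).le
  have e1 : a * Real.cosh u * Real.cosh v ≤ |a| * Real.cosh u * Real.cosh v := by
    gcongr; exact le_abs_self a
  have e2 : b * Real.sinh u * Real.cosh v ≤ b * Real.cosh u * Real.cosh v := by
    gcongr
  have e3 : (|a| + b) * Real.cosh v - b0 * Real.sinh v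
      ≤ -((b0 - b - |a|) * v - (|a| + b)) := by
    nlinarith [mul_le_mul_of_nonneg_left hc (add_nonneg ha0 hb),
      mul_le_mul_of_nonneg_left hs hd.le]
  nlinarith [mul_le_mul_of_nonneg_left e3 (by linarith : 0 ≤ Real.cosh u),
    mul_nonneg (sub_nonneg.2 hu1) h1]

theorem stmt_2 (a b b0 B B0 : ℝ) (hb : 0 ≤ b) (hab : |a| < b0 - b)
    (f : ℝ → ℝ)
    (hf : ∀ x, f x = a * Real.cosh (B + b * x) * Real.cosh (B0 + b0 * x)
      + b * Real.sinh (B + b * x) * Real.cosh (B0 + b0 * x)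
      - b0 * Real.cosh (B + b * x) * Real.sinh (B0 + b0 * x)) :
    Tendsto f atBot atTop ∧ Tendsto f atTop atBot := by
  constructor
  · have h := aux_top_s2 (-a) b b0 (-B) (-B0) hb (by rwa [abs_neg])
    have h2 := tendsto_neg_atBot_atTop.comp (h.comp tendsto_neg_atBot_atTop)
    refine h2.congr fun x => ?_
    have e1 : -B + b * -x = -(B + b * x) := by ring
    have e2 : -B0 + b0 * -x = -(B0 + b0 * x) := by ring
    simp only [Function.comp, hf, e1, e2, Real.cosh_neg, Real.sinh_neg]
    ring
  · rw [funext hf]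
    exact aux_top_s2 a b b0 B B0 hb hab
end

section
/- Let a, b, b_0, B, B_0 be real numbers with b ≥ 0 and |a| < b_0 − b. Define h : ℝ → ℝ by h(x) = exp(a x)·cosh(B_0 + b_0 x)/cosh(B + b x). Then there exists ξ ∈ ℝ such that h is strictly decreasing on (−∞, ξ], strictly increasing on [ξ, ∞) (so h attains a unique minimum at ξ), and h(x) → +∞ as x → +∞ and as x → −∞. -/
open Real Set Filter

lemma aux_lower (y v w : ℝ) (c K : ℝ) (hc : Real.exp y / 2 ≤ c) (hv : |v| ≤ w) (hK : 0 < K) :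
    K * (Real.exp (y - w) / 2) ≤ K * c / Real.cosh v := by
  have h1 : Real.cosh v ≤ Real.exp w := by
    rw [← Real.cosh_abs, Real.cosh_eq]
    have h2 : Real.exp (-|v|) ≤ Real.exp w :=
      Real.exp_le_exp.2 (by have := abs_nonneg v; linarith)
    have h3 : Real.exp (|v|) ≤ Real.exp w := Real.exp_le_exp.2 hv
    linarith
  rw [mul_div_assoc]
  apply mul_le_mul_of_nonneg_left _ hK.le
  rw [le_div_iff₀ (Real.cosh_pos v), Real.exp_sub]
  have hw := Real.exp_pos w
  calc Real.exp y / Real.exp w / 2 * Real.cosh v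
      ≤ Real.exp y / Real.exp w / 2 * Real.exp w := by gcongr
    _ = Real.exp y / 2 := by field_simp
    _ ≤ c := hc

lemma aux_strictMono (p q : ℝ) (hp : 0 < p) (hq : 0 < q) :
    StrictMono (fun s : ℝ => p * Real.exp s - q * Real.exp (-s)) := by
  intro x y hxy
  have h1 : Real.exp x < Real.exp y := Real.exp_lt_exp.2 hxy
  have h2 : Real.exp (-y) < Real.exp (-x) := Real.exp_lt_exp.2 (by linarith)
  have h3 := mul_lt_mul_of_pos_left h1 hp
  have h4 := mul_lt_mul_of_pos_left h2 hq
  show p * Real.exp x - q * Real.exp (-x) < p * Real.exp y - q * Real.exp (-y)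
  linarith

lemma aux_top_s5 (p q : ℝ) (hp : 0 < p) :
    Tendsto (fun s : ℝ => p * Real.exp s - q * Real.exp (-s)) atTop atTop := by
  have h1 : Tendsto (fun s : ℝ => p * Real.exp s) atTop atTop :=
    Real.tendsto_exp_atTop.const_mul_atTop hp
  have h2 : Tendsto (fun s : ℝ => -(q * Real.exp (-s))) atTop (nhds (-(q * 0))) :=
    (Real.tendsto_exp_neg_atTop_nhds_zero.const_mul q).neg
  simpa [sub_eq_add_neg] using h1.atTop_add h2

lemma aux_bot_s5 (p q : ℝ) (hq : 0 < q) :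
    Tendsto (fun s : ℝ => p * Real.exp s - q * Real.exp (-s)) atBot atBot := by
  have h := tendsto_neg_atTop_atBot.comp ((aux_top_s5 q p hq).comp tendsto_neg_atBot_atTop)
  refine h.congr fun s => ?_
  simp

lemma aux_lin_top (c d : ℝ) (hd : 0 < d) : Tendsto (fun x : ℝ => c + d * x) atTop atTop :=
  tendsto_atTop_add_const_left _ _ (tendsto_id.const_mul_atTop hd)

lemma aux_lin_bot (c d : ℝ) (hd : 0 < d) : Tendsto (fun x : ℝ => c + d * x) atBot atBot :=
  tendsto_atBot_add_const_left _ _ (tendsto_id.const_mul_atBot hd)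

theorem stmt_5 (a b b0 B B0 : ℝ) (hb : 0 ≤ b) (hab : |a| < b0 - b)
    (h : ℝ → ℝ)
    (hh : ∀ x, h x = Real.exp (a * x) * Real.cosh (B0 + b0 * x) / Real.cosh (B + b * x)) :
    ∃ ξ : ℝ, StrictAntiOn h (Iic ξ) ∧ StrictMonoOn h (Ici ξ) ∧
      Tendsto h atTop atTop ∧ Tendsto h atBot atTop := by
  obtain ⟨ha1, ha2⟩ := abs_lt.1 hab
  have hvb : ∀ x : ℝ, |B + b * x| ≤ |B| + b * |x| := fun x => by
    calc |B + b * x| ≤ |B| + |b * x| := abs_add_le _ _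
      _ = _ := by rw [abs_mul, abs_of_nonneg hb]
  -- limits
  have htop : Tendsto h atTop atTop := by
    have hl := (Real.tendsto_exp_atTop.comp
      (aux_lin_top (B0 - |B|) (a + b0 - b) (by linarith))).const_mul_atTop (one_half_pos (α := ℝ))
    refine tendsto_atTop_mono' _ ?_ hl
    filter_upwards [eventually_ge_atTop 0] with x hx
    rw [hh]
    refine le_trans (le_of_eq ?_) (aux_lower (B0 + b0 * x) (B + b * x) (|B| + b * |x|) _ _ ?_ (hvb x)
      (Real.exp_pos _))
    · rw [abs_of_nonneg hx, mul_div_assoc', ← Real.exp_add, Function.comp]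
      rw [one_div, inv_mul_eq_div]; congr 2; ring
    · rw [Real.cosh_eq]; have := Real.exp_pos (-(B0 + b0 * x)); linarith
  have hbot : Tendsto h atBot atTop := by
    have hl := (Real.tendsto_exp_atTop.comp
      ((aux_lin_top (-B0 - |B|) (b0 - b - a) (by linarith)).comp
        tendsto_neg_atBot_atTop)).const_mul_atTop (one_half_pos (α := ℝ))
    refine tendsto_atTop_mono' _ ?_ hl
    filter_upwards [eventually_le_atBot 0] with x hx
    rw [hh]
    refine le_trans (le_of_eq ?_) (aux_lower (-(B0 + b0 * x)) (B + b * x) (|B| + b * |x|) _ _ ?_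
      (hvb x) (Real.exp_pos _))
    · rw [abs_of_nonpos hx, mul_div_assoc', ← Real.exp_add, Function.comp, Function.comp]
      rw [one_div, inv_mul_eq_div]; congr 2; ring
    · rw [Real.cosh_eq]; have := Real.exp_pos ((B0 + b0 * x)); linarith
  -- the numerator of the derivative
  let F : ℝ → ℝ := fun s => (a + (b0 - b)) * Real.exp s - ((b0 - b) - a) * Real.exp (-s)
  let G : ℝ → ℝ := fun s => (a + (b0 + b)) * Real.exp s - ((b0 + b) - a) * Real.exp (-s)
  let N : ℝ → ℝ := fun x => F ((B0 + B) + (b0 + b) * x) + G ((B0 - B) + (b0 - b) * x)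
  have hs : 0 < b0 + b := by linarith
  have hd : 0 < b0 - b := by linarith
  have hNmono : StrictMono N := by
    have h1 : StrictMono F := aux_strictMono _ _ (by linarith) (by linarith)
    have h2 : StrictMono G := aux_strictMono _ _ (by linarith) (by linarith)
    intro x y hxy
    have e1 := mul_lt_mul_of_pos_left hxy hs
    have e2 := mul_lt_mul_of_pos_left hxy hd
    exact add_lt_add (h1 (by linarith)) (h2 (by linarith))
  have hNtop : Tendsto N atTop atTop :=
    ((aux_top_s5 _ _ (by linarith)).comp (aux_lin_top _ _ hs)).atTop_add_atTop
      ((aux_top_s5 _ _ (by linarith)).comp (aux_lin_top _ _ hd))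
  have hNbot : Tendsto N atBot atBot :=
    ((aux_bot_s5 _ _ (by linarith)).comp (aux_lin_bot _ _ hs)).atBot_add_atBot
      ((aux_bot_s5 _ _ (by linarith)).comp (aux_lin_bot _ _ hd))
  have hNcont : Continuous N := by
    simp only [N, F, G]; fun_prop
  obtain ⟨ξ, hξ⟩ := hNcont.surjective hNtop hNbot 0
  have hder : ∀ x, HasDerivAt h
      (Real.exp (a * x) / (4 * Real.cosh (B + b * x) ^ 2) * N x) x := by
    intro x
    have e0 : HasDerivAt (fun x : ℝ => a * x) a x := by simpa using (hasDerivAt_id x).const_mul a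
    have e1 : HasDerivAt (fun x : ℝ => B0 + b0 * x) b0 x := by
      simpa using ((hasDerivAt_id x).const_mul b0).const_add B0
    have e2 : HasDerivAt (fun x : ℝ => B + b * x) b x := by
      simpa using ((hasDerivAt_id x).const_mul b).const_add B
    have hc := (Real.cosh_pos (B + b * x)).ne'
    have := (e0.exp.mul e1.cosh).div e2.cosh hc
    have hfun : h = ((fun x => Real.exp (a * x)) * fun x => Real.cosh (B0 + b0 * x)) /
        fun x => Real.cosh (B + b * x) := funext hh
    rw [hfun]
    refine this.congr_deriv (Eq.symm ?_)
    have hN : N x = 4 * (a * Real.cosh (B0 + b0 * x) * Real.cosh (B + b * x)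
        + b0 * Real.sinh (B0 + b0 * x) * Real.cosh (B + b * x)
        - b * Real.cosh (B0 + b0 * x) * Real.sinh (B + b * x)) := by
      simp only [N, F, G]
      rw [show (B0 + B) + (b0 + b) * x = (B0 + b0 * x) + (B + b * x) by ring,
        show (B0 - B) + (b0 - b) * x = (B0 + b0 * x) + -(B + b * x) by ring]
      generalize B0 + b0 * x = u
      generalize B + b * x = v
      rw [neg_add, neg_add, neg_neg]
      simp only [Real.exp_add, Real.cosh_eq, Real.sinh_eq]
      ring
    rw [hN]
    simp only [Pi.mul_apply]
    field_simp
  have hcont : Continuous h := continuous_iff_continuousAt.2 fun x => (hder x).continuousAt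
  have hpos : ∀ x, 0 < Real.exp (a * x) / (4 * Real.cosh (B + b * x) ^ 2) := fun x => by
    have := Real.cosh_pos (B + b * x)
    positivity
  refine ⟨ξ, ?_, ?_, htop, hbot⟩
  · refine strictAntiOn_of_deriv_neg (convex_Iic ξ) hcont.continuousOn fun x hx => ?_
    rw [interior_Iic] at hx
    rw [(hder x).deriv]
    exact mul_neg_of_pos_of_neg (hpos x) (hξ ▸ hNmono hx)
  · refine strictMonoOn_of_deriv_pos (convex_Ici ξ) hcont.continuousOn fun x hx => ?_
    rw [interior_Ici] at hx
    rw [(hder x).deriv]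
    exact mul_pos (hpos x) (hξ ▸ hNmono hx)
end

section
/- Let n ≥ 1, let C_1,…,C_n and v_1,…,v_n be real numbers, let κ_1 < κ_2 be real numbers, and suppose Σ_{k=1}^n C_k·exp(v_k κ_1) = 0 and Σ_{k=1}^n C_k·exp(v_k κ_2) = 0. Define f : ℝ → ℝ by f(x) = Σ_{k=1}^n C_k e^{v_k x} for x ∈ (κ_1, κ_2) and f(x) = 0 otherwise, and define f̂(z) = ∫_{κ_1}^{κ_2} e^{−i z x} (Σ_{k=1}^n C_k e^{v_k x}) dx for z ∈ ℂ. Then for every R ∈ ℝ and every x ∈ ℝ, f(x) = (1/π) ∫_0^∞ Re( e^{(i u + R) x} · f̂(u − i R) ) du. -/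
open Real Set MeasureTheory

namespace Aux

noncomputable def E {n : ℕ} (C w : Fin n → ℝ) (j : ℕ) (y : ℝ) : ℂ :=
  ∑ k, (C k : ℂ) * (w k : ℂ) ^ j * Complex.exp ((w k : ℂ) * (y : ℂ))

noncomputable def J (a b : ℝ) (G : ℝ → ℂ) (u : ℝ) : ℂ :=
  ∫ y in a..b, Complex.exp (-(Complex.I * u) * y) * G y

lemma hasDerivAt_cexp (c : ℂ) (y : ℝ) :
    HasDerivAt (fun y : ℝ => Complex.exp (c * (y : ℂ))) (c * Complex.exp (c * y)) y := by
  have h1 : HasDerivAt (fun y : ℝ => c * (y : ℂ)) (c * 1) y :=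
    (Complex.ofRealCLM.hasDerivAt (x := y)).const_mul c
  have := h1.cexp
  convert this using 1
  ring

lemma E_deriv {n : ℕ} (C w : Fin n → ℝ) (j : ℕ) (y : ℝ) :
    HasDerivAt (E C w j) (E C w (j + 1) y) y := by
  unfold E
  refine HasDerivAt.fun_sum fun k _ => ?_
  have := (hasDerivAt_cexp (w k : ℂ) y).const_mul ((C k : ℂ) * (w k : ℂ) ^ j)
  exact this.congr_deriv (by ring)

lemma E_cont {n : ℕ} (C w : Fin n → ℝ) (j : ℕ) : Continuous (E C w j) := by
  unfold E; fun_prop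

lemma norm_e (u y : ℝ) : ‖Complex.exp (-(Complex.I * u) * y)‖ = 1 := by
  rw [Complex.norm_exp]; simp

lemma J_norm (a b : ℝ) (hab : a ≤ b) (G : ℝ → ℂ) (u : ℝ) :
    ‖J a b G u‖ ≤ ∫ y in a..b, ‖G y‖ := by
  refine (intervalIntegral.norm_integral_le_integral_norm hab).trans (le_of_eq ?_)
  simp only [norm_mul, norm_e, one_mul]

lemma J_cont (a b : ℝ) (G : ℝ → ℂ) (hG : Continuous G) : Continuous (J a b G) := by
  unfold J
  apply intervalIntegral.continuous_parametric_intervalIntegral_of_continuous'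
  fun_prop

lemma J_parts (a b : ℝ) (G G' : ℝ → ℂ) (hG : ∀ y, HasDerivAt G (G' y) y) (hG' : Continuous G')
    (u : ℝ) : (-(Complex.I * u)) * J a b G u + J a b G' u =
      Complex.exp (-(Complex.I * u) * b) * G b - Complex.exp (-(Complex.I * u) * a) * G a := by
  have hGc : Continuous G := continuous_iff_continuousAt.2 fun y => (hG y).continuousAt
  rw [← intervalIntegral.integral_deriv_mul_eq_sub
    (u := fun y : ℝ => Complex.exp (-(Complex.I * u) * y)) (v := G) (v' := G')
    (fun y _ => hasDerivAt_cexp _ y) (fun y _ => hG y)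
    (Continuous.intervalIntegrable (by fun_prop) _ _) (hG'.intervalIntegrable _ _)]
  rw [intervalIntegral.integral_add (Continuous.intervalIntegrable (by fun_prop) _ _)
    (Continuous.intervalIntegrable (by fun_prop) _ _)]
  unfold J
  rw [← intervalIntegral.integral_const_mul]
  simp only [mul_assoc]

lemma J_integrable (a b : ℝ) (hab : a ≤ b) (G G' G'' : ℝ → ℂ) (hG : ∀ y, HasDerivAt G (G' y) y)
    (hG' : ∀ y, HasDerivAt G' (G'' y) y) (hG'' : Continuous G'') (ha : G a = 0) (hb : G b = 0) :
    Integrable (J a b G) := by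
  have hGc : Continuous G := continuous_iff_continuousAt.2 fun y => (hG y).continuousAt
  have hGc' : Continuous G' := continuous_iff_continuousAt.2 fun y => (hG' y).continuousAt
  set M : ℝ := (∫ y in a..b, ‖G y‖) + ((∫ y in a..b, ‖G'' y‖) + (‖G' b‖ + ‖G' a‖)) with hM
  refine Integrable.mono' (integrable_inv_one_add_sq.const_mul M)
    (J_cont a b G hGc).aestronglyMeasurable (Filter.Eventually.of_forall fun u => ?_)
  have h1 := J_parts a b G G' hG hGc' u
  have h2 := J_parts a b G' G'' hG' hG'' u
  rw [ha, hb] at h1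
  have h3 : (u : ℂ) ^ 2 * J a b G u =
      -(J a b G'' u - (Complex.exp (-(Complex.I * u) * b) * G' b
        - Complex.exp (-(Complex.I * u) * a) * G' a)) := by
    linear_combination (Complex.I * u) * h1 + h2 + (u : ℂ) ^ 2 * J a b G u * Complex.I_sq
  have h4 : u ^ 2 * ‖J a b G u‖ ≤ (∫ y in a..b, ‖G'' y‖) + (‖G' b‖ + ‖G' a‖) := by
    have : u ^ 2 * ‖J a b G u‖ = ‖(u : ℂ) ^ 2 * J a b G u‖ := by simp
    rw [this, h3, norm_neg]
    refine (norm_sub_le _ _).trans (add_le_add (J_norm a b hab _ u) ((norm_sub_le _ _).trans ?_))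
    simp only [norm_mul, norm_e, one_mul, le_refl]
  have h5 := J_norm a b hab G u
  rw [← div_eq_mul_inv, le_div_iff₀ (by positivity)]
  nlinarith

open FourierTransform in
lemma inversion (a b : ℝ) (hab : a ≤ b) (G : ℝ → ℂ) (hGc : Continuous G)
    (ha : G a = 0) (hb : G b = 0) (hJ : Integrable (J a b G)) (x : ℝ) :
    ∫ u : ℝ, Complex.exp (Complex.I * u * x) * J a b G u =
      2 * π * (if a < x ∧ x < b then G x else 0) := by
  let g : ℝ → ℂ := fun y => G (max a (min b y))
  have hgc : Continuous g := by fun_prop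
  have hgv : ∀ y, g y = if a < y ∧ y < b then G y else 0 := by
    intro y
    simp only [g]
    split_ifs with h
    · rw [min_eq_right h.2.le, max_eq_right h.1.le]
    · rcases le_or_gt y a with h1 | h1
      · rw [min_eq_right (h1.trans hab), max_eq_left h1, ha]
      · have h2 : b ≤ y := by
          by_contra h3
          exact h ⟨h1, not_le.1 h3⟩
        rw [min_eq_left h2, max_eq_right hab, hb]
  have hgi : g = indicator (Ioc a b) G := by
    ext y
    rw [hgv, indicator_apply]
    by_cases h : y = b
    · subst h; simp [hb]
    · have : (a < y ∧ y < b) ↔ y ∈ Ioc a b := by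
        constructor
        · exact fun h => ⟨h.1, h.2.le⟩
        · exact fun h' => ⟨h'.1, lt_of_le_of_ne h'.2 h⟩
      simp only [this]
  have hgint : Integrable g := by
    rw [hgi, integrable_indicator_iff measurableSet_Ioc]
    exact (hGc.integrableOn_Icc).mono_set Ioc_subset_Icc_self
  have hF : 𝓕 g = fun ξ => J a b G (2 * π * ξ) := by
    ext ξ
    rw [Real.fourier_real_eq_integral_exp_smul, J, intervalIntegral.integral_of_le hab,
      ← integral_indicator measurableSet_Ioc]
    congr 1
    ext y
    rw [hgi]
    by_cases h : y ∈ Ioc a b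
    · simp only [indicator_of_mem h, smul_eq_mul]
      congr 2
      push_cast
      ring
    · simp [indicator_of_notMem h]
  have hpi : (2 * π) ≠ 0 := by positivity
  have hFi : Integrable (𝓕 g) := by
    rw [hF]
    exact (integrable_comp_mul_left_iff (J a b G) hpi).2 hJ
  have key := congrFun (hgc.fourierInv_fourier_eq hgint hFi) x
  rw [Real.fourierInv_eq', hF] at key
  have h6 := Measure.integral_comp_mul_left
    (fun u : ℝ => Complex.exp (Complex.I * u * x) * J a b G u) (2 * π)
  have h7 : ∫ v : ℝ, Complex.exp (↑(2 * π * inner ℝ v x) * Complex.I) • J a b G (2 * π * v) =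
      ∫ v : ℝ, Complex.exp (Complex.I * ((2 * π * v : ℝ) : ℂ) * x) * J a b G (2 * π * v) := by
    congr 1
    ext v
    rw [smul_eq_mul]
    congr 2
    simp
    ring
  rw [h7, h6, hgv, abs_of_pos (by positivity)] at key
  rw [← key, Complex.real_smul]
  generalize (∫ u : ℝ, Complex.exp (Complex.I * u * x) * J a b G u) = T
  have : (π : ℂ) ≠ 0 := by exact_mod_cast pi_ne_zero
  push_cast
  field_simp

lemma J_conj {n : ℕ} (C w : Fin n → ℝ) (j : ℕ) (a b u : ℝ) :
    J a b (E C w j) (-u) = (starRingEnd ℂ) (J a b (E C w j) u) := by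
  unfold J E
  rw [← intervalIntegral.intervalIntegral_conj]
  congr 1
  ext y
  simp [← Complex.exp_conj]

end Aux

theorem stmt_9 (n : ℕ) (hn : 1 ≤ n) (C v : Fin n → ℝ) (κ₁ κ₂ : ℝ) (hκ : κ₁ < κ₂)
    (hbd1 : ∑ k, C k * Real.exp (v k * κ₁) = 0)
    (hbd2 : ∑ k, C k * Real.exp (v k * κ₂) = 0)
    (f : ℝ → ℝ)
    (hf : ∀ x : ℝ, f x = if κ₁ < x ∧ x < κ₂ then ∑ k, C k * Real.exp (v k * x) else 0)
    (fhat : ℂ → ℂ)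
    (hfhat : ∀ z : ℂ, fhat z = ∫ x in κ₁..κ₂, Complex.exp (-(Complex.I * z) * (x : ℂ)) *
        ∑ k, (C k : ℂ) * Complex.exp ((v k : ℂ) * (x : ℂ))) :
    ∀ (R x : ℝ), f x = (1 / Real.pi) *
      ∫ u in Ioi (0 : ℝ),
        (Complex.exp ((Complex.I * (u : ℂ) + (R : ℂ)) * (x : ℂ)) *
          fhat ((u : ℂ) - Complex.I * (R : ℂ))).re := by
  intro R x
  let w : Fin n → ℝ := fun k => v k - R
  have hE : ∀ y : ℝ, Aux.E C w 0 y =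
      Complex.exp (-R * y) * ((∑ k, C k * Real.exp (v k * y) : ℝ) : ℂ) := by
    intro y
    simp only [Aux.E, w]
    push_cast
    rw [Finset.mul_sum]
    refine Finset.sum_congr rfl fun k _ => ?_
    rw [mul_left_comm, ← Complex.exp_add]
    congr 1
    · ring
    · congr 1; ring
  have ha : Aux.E C w 0 κ₁ = 0 := by rw [hE, hbd1]; simp
  have hb : Aux.E C w 0 κ₂ = 0 := by rw [hE, hbd2]; simp
  have hJ : Integrable (Aux.J κ₁ κ₂ (Aux.E C w 0)) :=
    Aux.J_integrable _ _ hκ.le _ _ _ (Aux.E_deriv C w 0) (Aux.E_deriv C w 1) (Aux.E_cont C w 2)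
      ha hb
  have hinv := Aux.inversion κ₁ κ₂ hκ.le _ (Aux.E_cont C w 0) ha hb hJ x
  have hfh : ∀ u : ℝ, fhat ((u : ℂ) - Complex.I * R) = Aux.J κ₁ κ₂ (Aux.E C w 0) u := by
    intro u
    rw [hfhat, Aux.J]
    congr 1
    ext y
    rw [hE]
    push_cast
    rw [← mul_assoc, ← Complex.exp_add]
    congr 2
    linear_combination (R : ℂ) * y * Complex.I_sq
  simp only [hfh]
  set K : ℝ → ℂ := fun u => Complex.exp ((Complex.I * (u : ℂ) + (R : ℂ)) * (x : ℂ)) *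
    Aux.J κ₁ κ₂ (Aux.E C w 0) u with hK
  have hK' : K = fun u : ℝ => Complex.exp (R * x) *
      (Complex.exp (Complex.I * u * x) * Aux.J κ₁ κ₂ (Aux.E C w 0) u) := by
    ext u
    rw [hK, ← mul_assoc, ← Complex.exp_add]
    congr 2
    ring
  have hKi : Integrable K := by
    rw [hK']
    refine Integrable.const_mul ?_ _
    refine hJ.bdd_mul (c := 1) (Continuous.aestronglyMeasurable (by fun_prop)) ?_
    refine Filter.Eventually.of_forall fun u => ?_
    rw [Complex.norm_exp]; simp
  have hKint : ∫ u, K u = ((2 * π * f x : ℝ) : ℂ) := by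
    rw [hK', integral_const_mul, hinv, hf]
    split_ifs
    · rw [hE]
      have : Complex.exp (R * x) * Complex.exp (-R * x) = 1 := by
        rw [← Complex.exp_add]; simp
      push_cast
      linear_combination (2 * π * ∑ k, (C k : ℂ) * Complex.exp (v k * x)) * this
    · simp
  have heven : ∀ u, (K |u|).re = (K u).re := by
    intro u
    rcases abs_choice u with h | h
    · rw [h]
    · rw [h]
      have : K (-u) = (starRingEnd ℂ) (K u) := by
        simp only [hK, Aux.J_conj, map_mul, ← Complex.exp_conj]
        simp
      rw [this, Complex.conj_re]
  have h8 := integral_comp_abs (f := fun u => (K u).re)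
  simp only [heven] at h8
  have h9 := integral_re hKi
  simp only [RCLike.re_eq_complex_re] at h9
  rw [h9, hKint, Complex.ofReal_re] at h8
  change f x = 1 / π * ∫ u in Ioi (0 : ℝ), (K u).re
  have := pi_pos
  field_simp
  linarith
end

section
/- Let 0 < T_k ≤ T, let 0 ≤ u_{k+1} < u_k, let K̃ ∈ ℝ and κ ≥ 0. Then ∫_{−κ}^{κ} ( K̃ · e^{u_{k+1}²(T−T_k)/2} · cosh(u_{k+1} x) − e^{u_k²(T−T_k)/2} · cosh(u_k x) ) · (1/√(2π T_k)) · e^{−x²/(2 T_k)} dx = K̃ · e^{u_{k+1}² T/2} · ( Φ(κ/√T_k − u_{k+1} √T_k) − Φ(−κ/√T_k − u_{k+1} √T_k) ) − e^{u_k² T/2} · ( Φ(κ/√T_k − u_k √T_k) − Φ(−κ/√T_k − u_k √T_k) ), where Φ is the standard normal cumulative distribution function and cosh is the real hyperbolic cosine. -/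
open Real Set

lemma aux_exp (Tk : ℝ) (hTk : 0 < Tk) (u κ : ℝ) (Φ : ℝ → ℝ)
    (hΦ : ∀ y : ℝ, Φ y = ∫ s in Iic y, (1 / Real.sqrt (2 * Real.pi)) * Real.exp (-s ^ 2 / 2)) :
    (∫ x in (-κ)..κ, Real.exp (u * x) *
        ((1 / Real.sqrt (2 * Real.pi * Tk)) * Real.exp (-x ^ 2 / (2 * Tk))))
      = Real.exp (u ^ 2 * Tk / 2) *
          (Φ (κ / Real.sqrt Tk - u * Real.sqrt Tk) - Φ (-κ / Real.sqrt Tk - u * Real.sqrt Tk)) := by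
  have hint : MeasureTheory.Integrable
      (fun s : ℝ => (1 / Real.sqrt (2 * Real.pi)) * Real.exp (-s ^ 2 / 2)) := by
    have := (integrable_exp_neg_mul_sq (b := 1 / 2) (by norm_num)).const_mul
      (1 / Real.sqrt (2 * Real.pi))
    refine this.congr (Filter.Eventually.of_forall fun s => ?_)
    simp only
    congr 2
    ring
  have hs : 0 < Real.sqrt Tk := Real.sqrt_pos.2 hTk
  have hsq : Real.sqrt Tk ^ 2 = Tk := Real.sq_sqrt hTk.le
  rw [hΦ, hΦ, intervalIntegral.integral_Iic_sub_Iic hint.integrableOn hint.integrableOn]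
  have h := intervalIntegral.integral_comp_div_sub (a := -κ) (b := κ)
    (fun s : ℝ => (1 / Real.sqrt (2 * Real.pi)) * Real.exp (-s ^ 2 / 2)) hs.ne'
    (u * Real.sqrt Tk)
  have h2 : ∀ I J : ℝ, J = Real.sqrt Tk • I → I = (Real.sqrt Tk)⁻¹ * J := by
    intro I J hJ
    rw [hJ, smul_eq_mul, inv_mul_cancel_left₀ hs.ne']
  rw [h2 _ _ h, ← intervalIntegral.integral_const_mul, ← intervalIntegral.integral_const_mul]
  congr 1
  ext x
  have e : Real.exp (u * x) * Real.exp (-x ^ 2 / (2 * Tk)) = Real.exp (u ^ 2 * Tk / 2) *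
      Real.exp (-(x / Real.sqrt Tk - u * Real.sqrt Tk) ^ 2 / 2) := by
    rw [← Real.exp_add, ← Real.exp_add]
    congr 1
    have : (x / Real.sqrt Tk - u * Real.sqrt Tk) ^ 2 = x ^ 2 / Tk - 2 * u * x + u ^ 2 * Tk := by
      rw [sub_sq, div_pow, mul_pow, hsq]
      field_simp
    rw [this]
    field_simp
    ring
  rw [Real.sqrt_mul (by positivity) Tk]
  calc _ = (1 / (Real.sqrt (2 * Real.pi) * Real.sqrt Tk)) *
        (Real.exp (u * x) * Real.exp (-x ^ 2 / (2 * Tk))) := by ring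
    _ = _ := by
      rw [e]
      field_simp

lemma aux_cosh (Tk : ℝ) (u κ : ℝ) :
    (∫ x in (-κ)..κ, Real.cosh (u * x) *
        ((1 / Real.sqrt (2 * Real.pi * Tk)) * Real.exp (-x ^ 2 / (2 * Tk))))
      = ∫ x in (-κ)..κ, Real.exp (u * x) *
        ((1 / Real.sqrt (2 * Real.pi * Tk)) * Real.exp (-x ^ 2 / (2 * Tk))) := by
  have h := intervalIntegral.integral_comp_neg (a := -κ) (b := κ) (fun x : ℝ => Real.exp (u * x) *
        ((1 / Real.sqrt (2 * Real.pi * Tk)) * Real.exp (-x ^ 2 / (2 * Tk))))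
  rw [neg_neg] at h
  have e : ∀ x : ℝ, Real.cosh (u * x) *
        ((1 / Real.sqrt (2 * Real.pi * Tk)) * Real.exp (-x ^ 2 / (2 * Tk))) =
      (1 / 2) * (Real.exp (u * x) *
        ((1 / Real.sqrt (2 * Real.pi * Tk)) * Real.exp (-x ^ 2 / (2 * Tk))) +
        Real.exp (u * -x) *
        ((1 / Real.sqrt (2 * Real.pi * Tk)) * Real.exp (-(-x) ^ 2 / (2 * Tk)))) := by
    intro x
    rw [Real.cosh_eq, neg_sq, mul_neg]
    ring
  simp_rw [e]
  rw [intervalIntegral.integral_const_mul, intervalIntegral.integral_add, h]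
  · ring
  · exact Continuous.intervalIntegrable (by fun_prop) _ _
  · exact Continuous.intervalIntegrable (by fun_prop) _ _

theorem stmt_12 (T Tk : ℝ) (hTk : 0 < Tk) (hTkT : Tk ≤ T)
    (uk uk1 : ℝ) (huk1 : 0 ≤ uk1) (hu : uk1 < uk)
    (Ktil κ : ℝ) (hκ : 0 ≤ κ)
    (Φ : ℝ → ℝ)
    (hΦ : ∀ y : ℝ, Φ y = ∫ s in Iic y, (1 / Real.sqrt (2 * Real.pi)) * Real.exp (-s ^ 2 / 2)) :
    (∫ x in (-κ)..κ,
        (Ktil * Real.exp (uk1 ^ 2 * (T - Tk) / 2) * Real.cosh (uk1 * x)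
          - Real.exp (uk ^ 2 * (T - Tk) / 2) * Real.cosh (uk * x)) *
          (1 / Real.sqrt (2 * Real.pi * Tk)) * Real.exp (-x ^ 2 / (2 * Tk)))
      = Ktil * Real.exp (uk1 ^ 2 * T / 2) *
          (Φ (κ / Real.sqrt Tk - uk1 * Real.sqrt Tk) - Φ (-κ / Real.sqrt Tk - uk1 * Real.sqrt Tk))
        - Real.exp (uk ^ 2 * T / 2) *
          (Φ (κ / Real.sqrt Tk - uk * Real.sqrt Tk) - Φ (-κ / Real.sqrt Tk - uk * Real.sqrt Tk)) := by
  have key : ∀ u : ℝ, Real.exp (u ^ 2 * (T - Tk) / 2) * Real.exp (u ^ 2 * Tk / 2)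
      = Real.exp (u ^ 2 * T / 2) := by
    intro u
    rw [← Real.exp_add]
    congr 1
    ring
  have e : ∀ x : ℝ, (Ktil * Real.exp (uk1 ^ 2 * (T - Tk) / 2) * Real.cosh (uk1 * x)
          - Real.exp (uk ^ 2 * (T - Tk) / 2) * Real.cosh (uk * x)) *
          (1 / Real.sqrt (2 * Real.pi * Tk)) * Real.exp (-x ^ 2 / (2 * Tk)) =
      (Ktil * Real.exp (uk1 ^ 2 * (T - Tk) / 2)) * (Real.cosh (uk1 * x) *
        ((1 / Real.sqrt (2 * Real.pi * Tk)) * Real.exp (-x ^ 2 / (2 * Tk)))) -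
      Real.exp (uk ^ 2 * (T - Tk) / 2) * (Real.cosh (uk * x) *
        ((1 / Real.sqrt (2 * Real.pi * Tk)) * Real.exp (-x ^ 2 / (2 * Tk)))) := by
    intro x
    ring
  simp_rw [e]
  rw [intervalIntegral.integral_sub, intervalIntegral.integral_const_mul,
    intervalIntegral.integral_const_mul, aux_cosh, aux_cosh, aux_exp Tk hTk _ _ Φ hΦ,
    aux_exp Tk hTk _ _ Φ hΦ, ← key uk, ← key uk1]
  · ring
  · exact Continuous.intervalIntegrable (by fun_prop) _ _
  · exact Continuous.intervalIntegrable (by fun_prop) _ _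
end

section
/- Let λ > 0, α⁺ > 0, α⁻ > 0, β⁺, β⁻ ∈ ℝ, t ≥ 0, and let u ∈ ℝ with −α⁻ < u < α⁺. Then ∫_0^t λ · ( (β⁺ + β⁻)(e^{−λ s} u)² + (β⁺ α⁻ − β⁻ α⁺)(e^{−λ s} u) ) / ( (α⁺ − e^{−λ s} u)(α⁻ + e^{−λ s} u) ) ds = ((β⁺ + β⁻)/2) · log( (α⁺ − e^{−λ t} u)(α⁻ + e^{−λ t} u) / ((α⁺ − u)(α⁻ + u)) ) + ((β⁺ − β⁻)/2) · log( (α⁺ − e^{−λ t} u)(α⁻ + u) / ((α⁺ − u)(α⁻ + e^{−λ t} u)) ). (Note that |e^{−λ s} u| ≤ |u| for s ≥ 0, so the integrand's denominator never vanishes on [0, t].) -/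
open Real

theorem stmt_15 (lam αp αm βp βm t u : ℝ)
    (hlam : 0 < lam) (hαp : 0 < αp) (hαm : 0 < αm) (ht : 0 ≤ t)
    (hu1 : -αm < u) (hu2 : u < αp) :
    (∫ s in (0 : ℝ)..t,
        lam * ((βp + βm) * (Real.exp (-lam * s) * u) ^ 2
            + (βp * αm - βm * αp) * (Real.exp (-lam * s) * u)) /
          ((αp - Real.exp (-lam * s) * u) * (αm + Real.exp (-lam * s) * u)))
      = (βp + βm) / 2 *
          Real.log ((αp - Real.exp (-lam * t) * u) * (αm + Real.exp (-lam * t) * u) /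
            ((αp - u) * (αm + u)))
        + (βp - βm) / 2 *
          Real.log ((αp - Real.exp (-lam * t) * u) * (αm + u) /
            ((αp - u) * (αm + Real.exp (-lam * t) * u))) := by
  have hpos : ∀ s : ℝ, 0 ≤ s →
      0 < αp - Real.exp (-lam * s) * u ∧ 0 < αm + Real.exp (-lam * s) * u := by
    intro s hs
    have h0 := Real.exp_pos (-lam * s)
    have h1 : Real.exp (-lam * s) ≤ 1 := by
      apply Real.exp_le_one_iff.mpr
      nlinarith
    constructor
    · rcases le_total 0 u with h | h <;> nlinarith
    · rcases le_total 0 u with h | h <;> nlinarith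
  have hx : ∀ s : ℝ, HasDerivAt (fun s : ℝ => Real.exp (-lam * s) * u)
      (Real.exp (-lam * s) * (-lam) * u) s := by
    intro s
    have h : HasDerivAt (fun s : ℝ => -lam * s) (-lam) s := by
      simpa using (hasDerivAt_id s).const_mul (-lam)
    exact h.exp.mul_const u
  have key := intervalIntegral.integral_eq_sub_of_hasDerivAt (a := 0) (b := t)
    (f := fun s : ℝ => βp * Real.log (αp - Real.exp (-lam * s) * u)
      + βm * Real.log (αm + Real.exp (-lam * s) * u))
    (f' := fun s : ℝ => lam * ((βp + βm) * (Real.exp (-lam * s) * u) ^ 2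
            + (βp * αm - βm * αp) * (Real.exp (-lam * s) * u)) /
          ((αp - Real.exp (-lam * s) * u) * (αm + Real.exp (-lam * s) * u)))
    (by
      intro s hs
      rw [Set.uIcc_of_le ht] at hs
      obtain ⟨h1, h2⟩ := hpos s hs.1
      have h := ((((hx s).const_sub αp).log h1.ne').const_mul βp).add
        ((((hx s).const_add αm).log h2.ne').const_mul βm)
      refine h.congr_deriv ?_
      have h1' := h1.ne'
      have h2' := h2.ne'
      generalize Real.exp (-lam * s) = e at *
      field_simp
      ring)
    (by
      apply ContinuousOn.intervalIntegrable
      apply ContinuousOn.div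
      · fun_prop
      · fun_prop
      · intro s hs
        rw [Set.uIcc_of_le ht] at hs
        obtain ⟨h1, h2⟩ := hpos s hs.1
        exact (mul_pos h1 h2).ne')
  rw [key]
  obtain ⟨h1, h2⟩ := hpos t ht
  have h3 : 0 < αp - u := by linarith
  have h4 : 0 < αm + u := by linarith
  rw [Real.log_div (mul_pos h1 h2).ne' (mul_pos h3 h4).ne',
    Real.log_div (mul_pos h1 h4).ne' (mul_pos h3 h2).ne',
    Real.log_mul h1.ne' h2.ne', Real.log_mul h3.ne' h4.ne',
    Real.log_mul h1.ne' h4.ne', Real.log_mul h3.ne' h2.ne']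
  simp only [mul_zero, Real.exp_zero, one_mul]
  ring
end
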